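/- Define u₀ : ℝ → ℝ by u₀(y) = −y for y ≤ 0 and u₀(y) = −y^{3/2} for y ≥ 0. Then the proximal subdifferential of u₀ at 0 equals the half-open interval [−1, 0): a real number p belongs to D⁻_pr u₀(0) if and only if −1 ≤ p < 0. -/

import Mathlib

/-- The initial datum `u₀(y) = -y` for `y ≤ 0`, `u₀(y) = -y^(3/2)` for `y ≥ 0`. -/
noncomputable def u₀ : ℝ → ℝ :=
  fun y => if y ≤ 0 then -y else -(y ^ ((3 : ℝ) / 2))

/-- `p` is a proximal `K`-subgradient of `v : ℝ → ℝ` at `x₀`. -/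
def IsProxSubgrad (v : ℝ → ℝ) (x₀ p K : ℝ) : Prop :=
  ∃ r > 0, ∀ x : ℝ, |x - x₀| < r →
    v x₀ + p * (x - x₀) - K / 2 * (x - x₀) ^ 2 ≤ v x

/-!
A proximal subgradient inequality at `x₀` holds for some `K` exactly when the second-order quotient
`(v x - v x₀ - p (x - x₀)) / (x - x₀)²` is bounded below near `x₀`. For `u₀` at `0` the quotient is
`-(1 + p) / y` on the left, bounded below iff `-1 ≤ p`; on the right it is `-t - p t²` with
`t = 1 / √y → ∞`, bounded below iff `p < 0`.
-/

section ProximalSubdifferential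

open Filter Topology

section BoundedUnder

variable {α β 𝕜 : Type*} {l l₁ l₂ : Filter α}

theorem isBoundedUnder_sup_iff {r : β → β → Prop} [IsTrans β r] [IsDirected β r] {f : α → β} :
    IsBoundedUnder r (l₁ ⊔ l₂) f ↔ IsBoundedUnder r l₁ f ∧ IsBoundedUnder r l₂ f := by
  refine ⟨fun h => ⟨h.mono le_sup_left, h.mono le_sup_right⟩, fun ⟨h₁, h₂⟩ => ?_⟩
  rw [IsBoundedUnder, map_sup]
  exact isBounded_sup h₁ h₂

theorem isBoundedUnder_congr {r : β → β → Prop} {f g : α → β} (h : f =ᶠ[l] g) :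
    IsBoundedUnder r l f ↔ IsBoundedUnder r l g := by
  rw [IsBoundedUnder, IsBoundedUnder, map_congr h]

variable [Field 𝕜] [LinearOrder 𝕜] [IsStrictOrderedRing 𝕜] [l.NeBot] {f : α → 𝕜} {c : 𝕜}

theorem isBoundedUnder_ge_const_mul_iff_nonpos (hf : Tendsto f l atBot) :
    IsBoundedUnder (· ≥ ·) l (fun x => c * f x) ↔ c ≤ 0 := by
  refine ⟨fun h => ?_, fun hc => ?_⟩
  · by_contra! hc
    exact not_isBoundedUnder_of_tendsto_atBot (hf.const_mul_atBot hc) h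
  · refine isBoundedUnder_of_eventually_ge (a := 0) ?_
    filter_upwards [hf.eventually_le_atBot 0] with x hx
    exact mul_nonneg_of_nonpos_of_nonpos hc hx

theorem isBoundedUnder_ge_neg_sub_const_mul_sq_iff_neg (hf : Tendsto f l atTop) :
    IsBoundedUnder (· ≥ ·) l (fun x => -f x - c * f x ^ 2) ↔ c < 0 := by
  refine ⟨fun h => ?_, fun hc => ?_⟩
  · by_contra! hc
    have hle : ∀ x, -f x - c * f x ^ 2 ≤ -f x :=
      fun x => sub_le_self _ (mul_nonneg hc (sq_nonneg _))
    have htendsto := tendsto_atBot_mono hle (tendsto_neg_atTop_atBot.comp hf)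
    exact not_isBoundedUnder_of_tendsto_atBot htendsto h
  · refine isBoundedUnder_of_eventually_ge (a := 0) ?_
    filter_upwards [hf.eventually_ge_atTop 0, hf.eventually_ge_atTop (1 / -c)] with x hx₀ hx
    have hone : 1 ≤ f x * -c := (div_le_iff₀ (neg_pos.mpr hc)).mp hx
    calc
      0 ≤ f x * (f x * -c - 1) := mul_nonneg hx₀ (sub_nonneg.mpr hone)
      _ = -f x - c * f x ^ 2 := by ring

end BoundedUnder

section ProxQuotient

/-- The second-order difference quotient of `v` at `x₀` relative to the slope `p`, whose lower
bounds near `x₀` are the values `-K / 2` in the proximal inequality. It takes the junk value `0` at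
`x = x₀`, so it is only considered on punctured neighbourhoods. -/
noncomputable def proxQuotient (v : ℝ → ℝ) (x₀ p x : ℝ) : ℝ :=
  (v x - v x₀ - p * (x - x₀)) / (x - x₀) ^ 2

variable {v : ℝ → ℝ} {x₀ p K : ℝ}

theorem isProxSubgrad_iff_eventually_le_proxQuotient :
    IsProxSubgrad v x₀ p K ↔ ∀ᶠ x in 𝓝[≠] x₀, -(K / 2) ≤ proxQuotient v x₀ p x := by
  have hpoint (x : ℝ) : (v x₀ + p * (x - x₀) - K / 2 * (x - x₀) ^ 2 ≤ v x) ↔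
      (x ∈ ({x₀}ᶜ : Set ℝ) → -(K / 2) ≤ proxQuotient v x₀ p x) := by
    obtain rfl | hx := eq_or_ne x x₀
    · simp
    · have hsq : 0 < (x - x₀) ^ 2 := sq_pos_of_ne_zero (sub_ne_zero.mpr hx)
      rw [proxQuotient, le_div_iff₀ hsq, forall_prop_of_true (Set.mem_compl_singleton_iff.mpr hx)]
      constructor <;> intro h <;> linarith
  simp only [eventually_nhdsWithin_iff, Metric.eventually_nhds_iff, Real.dist_eq, IsProxSubgrad,
    hpoint]

theorem exists_isProxSubgrad_iff_isBoundedUnder_ge :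
    (∃ K > 0, IsProxSubgrad v x₀ p K) ↔
      IsBoundedUnder (· ≥ ·) (𝓝[≠] x₀) (proxQuotient v x₀ p) := by
  simp only [isProxSubgrad_iff_eventually_le_proxQuotient]
  refine ⟨fun ⟨K, _, hK⟩ => isBoundedUnder_of_eventually_ge hK, fun ⟨b, hb⟩ => ?_⟩
  refine ⟨2 * |b| + 1, by positivity, (eventually_map.mp hb).mono fun x hx => ?_⟩
  linarith [neg_abs_le b]

end ProxQuotient

section InitialDatum

variable {p y : ℝ}

theorem u₀_of_nonpos (hy : y ≤ 0) : u₀ y = -y := if_pos hy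

theorem u₀_of_pos (hy : 0 < y) : u₀ y = -√y ^ 3 := by
  rw [u₀, if_neg hy.not_ge, Real.sqrt_eq_rpow, ← Real.rpow_mul_natCast hy.le]
  norm_num

theorem proxQuotient_u₀_zero_of_neg (hy : y < 0) :
    proxQuotient u₀ 0 p y = -(1 + p) * y⁻¹ := by
  have hy₀ := hy.ne
  rw [proxQuotient, u₀_of_nonpos hy.le, u₀_of_nonpos le_rfl]
  field_simp
  ring

theorem proxQuotient_u₀_zero_of_pos (hy : 0 < y) :
    proxQuotient u₀ 0 p y = -(√y)⁻¹ - p * (√y)⁻¹ ^ 2 := by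
  obtain ⟨t, ht, rfl⟩ : ∃ t, 0 < t ∧ t ^ 2 = y := ⟨√y, Real.sqrt_pos.mpr hy, Real.sq_sqrt hy.le⟩
  rw [proxQuotient, u₀_of_pos hy, u₀_of_nonpos le_rfl, Real.sqrt_sq ht.le]
  field_simp
  ring

theorem tendsto_inv_sqrt_nhdsGT_zero : Tendsto (fun y : ℝ => (√y)⁻¹) (𝓝[>] 0) atTop := by
  simpa only [Function.comp_def, Real.sqrt_inv] using
    Real.tendsto_sqrt_atTop.comp tendsto_inv_nhdsGT_zero

theorem isBoundedUnder_ge_proxQuotient_u₀_nhdsLT_zero_iff :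
    IsBoundedUnder (· ≥ ·) (𝓝[<] 0) (proxQuotient u₀ 0 p) ↔ -1 ≤ p := by
  have hquot : proxQuotient u₀ 0 p =ᶠ[𝓝[<] 0] fun y => -(1 + p) * y⁻¹ :=
    eventually_mem_nhdsWithin.mono fun _ hy => proxQuotient_u₀_zero_of_neg hy
  rw [isBoundedUnder_congr hquot, isBoundedUnder_ge_const_mul_iff_nonpos tendsto_inv_nhdsLT_zero,
    neg_nonpos, neg_le_iff_add_nonneg']

theorem isBoundedUnder_ge_proxQuotient_u₀_nhdsGT_zero_iff :
    IsBoundedUnder (· ≥ ·) (𝓝[>] 0) (proxQuotient u₀ 0 p) ↔ p < 0 := by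
  have hquot : proxQuotient u₀ 0 p =ᶠ[𝓝[>] 0] fun y => -(√y)⁻¹ - p * (√y)⁻¹ ^ 2 :=
    eventually_mem_nhdsWithin.mono fun _ hy => proxQuotient_u₀_zero_of_pos hy
  rw [isBoundedUnder_congr hquot,
    isBoundedUnder_ge_neg_sub_const_mul_sq_iff_neg tendsto_inv_sqrt_nhdsGT_zero]

end InitialDatum

end ProximalSubdifferential

/-- The proximal subdifferential of `u₀` at `0` equals the half-open interval `[-1, 0)`. -/
theorem stmt17 (p : ℝ) :
    (∃ K > 0, IsProxSubgrad u₀ 0 p K) ↔ (-1 ≤ p ∧ p < 0) := by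
  rw [exists_isProxSubgrad_iff_isBoundedUnder_ge, ← nhdsLT_sup_nhdsGT, isBoundedUnder_sup_iff,
    isBoundedUnder_ge_proxQuotient_u₀_nhdsLT_zero_iff,
    isBoundedUnder_ge_proxQuotient_u₀_nhdsGT_zero_iff]
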